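/- Let G be a sofic group, let H be a monotileably amenable subgroup of G, and let θ : H → G be an injective group homomorphism. Then the HNN extension Γ = G*_θ, i.e., the group generated by G and an extra generator t subject to the additional relations t⁻¹ht = θ(h) for all h ∈ H, is sofic. -/

import Mathlib

open scoped Classical Pointwise

/-- The normalized Hamming distance between two permutations of a finite set. -/
noncomputable def permDist {X : Type*} [Fintype X] (σ τ : Equiv.Perm X) : ℝ :=
  ((Finset.univ.filter fun x => σ x ≠ τ x).card : ℝ) / (Fintype.card X)

/-- A group is sofic if for every finite subset `F` and every `ε > 0` there is a map
to some symmetric group that is an `(F, ε)`-quasi-action. -/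
def IsSofic (Γ : Type*) [Group Γ] : Prop :=
  ∀ (F : Finset Γ) (ε : ℝ), 0 < ε → ∃ n : ℕ, 0 < n ∧ ∃ φ : Γ → Equiv.Perm (Fin n),
    (∀ g ∈ F, g ≠ 1 → permDist (φ g) 1 > 1 - ε) ∧
    (∀ g₁ ∈ F, ∀ g₂ ∈ F, permDist (φ (g₁⁻¹ * g₂)) ((φ g₁)⁻¹ * φ g₂) < ε)

/-- A finite subset `T` of a group is a tile if the group is the disjoint union of right
translates of `T`, i.e. there is a set `C` of centers so that `(t, c) ↦ t * c` is a
bijection from `T × C` onto the group. -/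
def IsTile {G : Type*} [Group G] (T : Finset G) : Prop :=
  ∃ C : Set G, Function.Bijective fun p : T × C => (p.1 : G) * (p.2 : G)

/-- A group is monotileably amenable if for every finite set `K` and every `ε > 0` there is
a `(K, ε)`-invariant tile `T`, i.e. a tile with `|K T \ T| < ε |T|`. -/
def MonotileablyAmenable (G : Type*) [Group G] [DecidableEq G] : Prop :=
  ∀ (K : Finset G) (ε : ℝ), 0 < ε →
    ∃ T : Finset G, IsTile T ∧ (((K * T) \ T).card : ℝ) < ε * T.card

/-!
Take a good almost action of `G` on a finite set `X` and a Følner set `F ⊆ A`. A random ordering `ω`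
of `X` assigns each point to a patch `{s x | s ∈ F}`: among the patches containing it, the one whose
center `x` comes first. By almost invariance, a point and its translate by a given element of `A`
are mostly assigned to the same patch. On `X × Perm X` there is a permutation `τ₀` that carries each
patch of `A` to the patch of `B` with the same center: changing `ω` by a permutation matching the
two almost actions near the center keeps the patches of `B` disjoint. So `τ₀` almost conjugates `A`
to `B`.

Reduced words need not act freely through `τ₀`. Label each edge of `τ₀` by its center and `ω`. If a
backtracking pair of edges has equal labels, the element of `G` between them lies in `A`, resp. `B`,
so a reduced word reads a reduced word of a free group off the labels. In the skew product with a
finite quotient of that free group in which short words survive, short reduced words move almost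
all points. A metric reduced product of these permutation groups then receives a homomorphism from
the HNN extension that sends every nontrivial element far from the identity.
-/

open Equiv Filter Finset Function HNNExtension Topology

section PermDist

variable {X : Type*} [Fintype X]

lemma permDist_eq_hammingDist_div (σ τ : Perm X) :
    permDist σ τ = hammingDist σ τ / Fintype.card X := rfl

lemma permDist_nonneg (σ τ : Perm X) : 0 ≤ permDist σ τ := by
  unfold permDist; positivity

lemma permDist_le_one (σ τ : Perm X) : permDist σ τ ≤ 1 :=
  div_le_one_of_le₀ (mod_cast hammingDist_le_card_fintype) (Nat.cast_nonneg _)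

@[simp]
lemma permDist_self (σ : Perm X) : permDist σ σ = 0 := by simp [permDist]

lemma permDist_comm (σ τ : Perm X) : permDist σ τ = permDist τ σ := by
  simp only [permDist_eq_hammingDist_div, hammingDist_comm]

lemma permDist_triangle (σ τ ρ : Perm X) : permDist σ ρ ≤ permDist σ τ + permDist τ ρ := by
  simp only [permDist_eq_hammingDist_div, ← add_div]
  gcongr
  exact_mod_cast hammingDist_triangle σ τ ρ

@[simp]
lemma permDist_mul_left (ρ σ τ : Perm X) : permDist (ρ * σ) (ρ * τ) = permDist σ τ := by
  simp [permDist]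

@[simp]
lemma permDist_mul_right (ρ σ τ : Perm X) : permDist (σ * ρ) (τ * ρ) = permDist σ τ := by
  unfold permDist
  congr 2
  exact card_equiv ρ fun x ↦ by rw [mem_filter_univ, mem_filter_univ]; rfl

lemma permDist_inv_mul_one (σ τ : Perm X) : permDist (σ⁻¹ * τ) 1 = permDist σ τ := by
  rw [← permDist_mul_left σ, mul_inv_cancel_left, mul_one, permDist_comm]

@[simp]
lemma permDist_permCongrHom {Y : Type*} [Fintype Y] (e : X ≃ Y) (σ τ : Perm X) :
    permDist (e.permCongrHom σ) (e.permCongrHom τ) = permDist σ τ := by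
  unfold permDist
  rw [Fintype.card_congr e]
  congr 2
  exact (card_equiv e (by simp [permCongrHom])).symm

lemma card_filter_ne_eq_permDist_mul [Nonempty X] [DecidableEq X] (σ τ : Perm X) :
    (#{x | σ x ≠ τ x} : ℝ) = permDist σ τ * Fintype.card X := by
  rw [permDist, div_mul_cancel₀ _ (by simp)]
  congr!

lemma card_filter_eq_eq_one_sub_permDist_mul [Nonempty X] [DecidableEq X] (σ τ : Perm X) :
    (#{x | σ x = τ x} : ℝ) = (1 - permDist σ τ) * Fintype.card X := by
  rw [sub_mul, one_mul, ← card_filter_ne_eq_permDist_mul, eq_sub_iff_add_eq]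
  exact_mod_cast card_filter_add_card_filter_not (s := univ) fun x ↦ σ x = τ x

lemma permDist_le_of_forall_notMem_eq [Nonempty X] {σ τ : Perm X} {S : Finset X} {ε : ℝ}
    (hS : #S ≤ ε * Fintype.card X) (h : ∀ x ∉ S, σ x = τ x) : permDist σ τ ≤ ε := by
  refine div_le_of_le_mul₀ (by positivity)
    (nonneg_of_mul_nonneg_left ((Nat.cast_nonneg _).trans hS) (by simp [Fintype.card_pos]))
    (le_trans ?_ hS)
  gcongr
  intro x hx
  by_contra hxS
  exact (mem_filter.1 hx).2 (h x hxS)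

lemma one_sub_le_permDist_of_forall_notMem_ne [Nonempty X] {σ τ : Perm X} {S : Finset X} {ε : ℝ}
    (hS : #S ≤ ε * Fintype.card X) (h : ∀ x ∉ S, σ x ≠ τ x) : 1 - ε ≤ permDist σ τ := by
  have hX : (0 : ℝ) < Fintype.card X := mod_cast Fintype.card_pos
  have hcover : (univ : Finset X) ⊆ ({x | σ x ≠ τ x} : Finset X) ∪ S := fun x _ ↦ by
    by_cases hx : x ∈ S
    · simp [hx]
    · simp [h x hx]
  have hcard : (Fintype.card X : ℝ) ≤ #{x | σ x ≠ τ x} + #S :=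
    mod_cast (card_le_card hcover).trans (card_union_le _ _)
  refine (le_div_iff₀ hX).2 ?_
  linarith

end PermDist

section MetricReducedProduct

variable {I : Type*} (f : Filter I) (Z : I → Type*) [∀ i, Fintype (Z i)]

/-- The normal subgroup of the sequences of permutations whose distance to the identity tends to
zero along `f`. Quotients by it are metric reduced products of symmetric groups. -/
def permNullSubgroup : Subgroup (∀ i, Perm (Z i)) where
  carrier := {σ | Tendsto (fun i ↦ permDist (σ i) 1) f (𝓝 0)}
  one_mem' := by simp [tendsto_const_nhds]
  mul_mem' {σ τ} hσ hτ := by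
    refine squeeze_zero (fun i ↦ permDist_nonneg _ _) (fun i ↦ ?_) (by simpa using hτ.add hσ)
    refine (permDist_triangle _ (σ i) _).trans_eq ?_
    conv_lhs => enter [1, 2]; rw [← mul_one (σ i)]
    rw [Pi.mul_apply, permDist_mul_left]
  inv_mem' {σ} hσ := by
    refine hσ.congr fun i ↦ ?_
    rw [Pi.inv_apply, ← permDist_inv_mul_one, mul_one, permDist_comm]

instance : (permNullSubgroup f Z).Normal where
  conj_mem σ hσ τ := by
    refine hσ.congr fun i ↦ ?_
    rw [← permDist_mul_left (τ i), ← permDist_mul_right (τ i)⁻¹]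
    simp

variable {f Z}

lemma permNullSubgroup_mk_eq_mk {σ τ : ∀ i, Perm (Z i)} :
    (σ : (∀ i, Perm (Z i)) ⧸ permNullSubgroup f Z) = τ ↔
      Tendsto (fun i ↦ permDist (σ i) (τ i)) f (𝓝 0) := by
  rw [QuotientGroup.eq]
  exact tendsto_congr fun i ↦ permDist_inv_mul_one _ _

lemma tendsto_permDist_one_congr {σ τ : ∀ i, Perm (Z i)}
    (h : Tendsto (fun i ↦ permDist (σ i) (τ i)) f (𝓝 0))
    (hσ : Tendsto (fun i ↦ permDist (σ i) 1) f (𝓝 1)) :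
    Tendsto (fun i ↦ permDist (τ i) 1) f (𝓝 1) := by
  refine tendsto_of_tendsto_of_tendsto_of_le_of_le (by simpa using hσ.sub h) tendsto_const_nhds
    (fun i ↦ ?_) fun i ↦ permDist_le_one _ _
  exact sub_le_iff_le_add'.2 (permDist_triangle _ _ _)

theorem isSofic_of_monoidHom {Γ : Type*} [Group Γ] [f.NeBot] [∀ i, Nonempty (Z i)]
    (L : Γ →* (∀ i, Perm (Z i)) ⧸ permNullSubgroup f Z)
    (hL : ∀ γ ≠ 1, ∃ σ : ∀ i, Perm (Z i), L γ = σ ∧ Tendsto (fun i ↦ permDist (σ i) 1) f (𝓝 1)) :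
    IsSofic Γ := by
  choose Φ hΦ using fun γ ↦ QuotientGroup.mk_surjective (L γ)
  intro F ε hε
  have hfree : ∀ᶠ i in f, ∀ γ ∈ F, γ ≠ 1 → 1 - ε < permDist (Φ γ i) 1 := by
    refine (eventually_all_finset F).2 fun γ _ ↦ eventually_imp_distrib_left.2 fun hγ ↦ ?_
    obtain ⟨σ, hσ, hσ_one⟩ := hL γ hγ
    exact (tendsto_permDist_one_congr (permNullSubgroup_mk_eq_mk.1 (hσ.symm.trans (hΦ γ).symm))
      hσ_one).eventually (lt_mem_nhds (by linarith))
  have hmul : ∀ᶠ i in f, ∀ γ₁ ∈ F, ∀ γ₂ ∈ F,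
      permDist (Φ (γ₁⁻¹ * γ₂) i) ((Φ γ₁ i)⁻¹ * Φ γ₂ i) < ε := by
    refine (eventually_all_finset F).2 fun γ₁ _ ↦ (eventually_all_finset F).2 fun γ₂ _ ↦ ?_
    have h : (Φ (γ₁⁻¹ * γ₂) : (∀ i, Perm (Z i)) ⧸ permNullSubgroup f Z) =
        ((Φ γ₁)⁻¹ * Φ γ₂ : ∀ i, Perm (Z i)) := by
      simp only [QuotientGroup.mk_mul, QuotientGroup.mk_inv, hΦ, map_mul, map_inv]
    exact (permNullSubgroup_mk_eq_mk.1 h).eventually (gt_mem_nhds hε)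
  obtain ⟨i, hi_free, hi_mul⟩ := (hfree.and hmul).exists
  let e := Fintype.equivFin (Z i)
  refine ⟨Fintype.card (Z i), Fintype.card_pos, fun γ ↦ e.permCongrHom (Φ γ i),
    fun γ hγ hγ_one ↦ ?_, fun γ₁ h₁ γ₂ h₂ ↦ ?_⟩
  · rw [← map_one e.permCongrHom, permDist_permCongrHom]
    exact hi_free γ hγ hγ_one
  · rw [← map_inv, ← map_mul, permDist_permCongrHom]
    exact hi_mul γ₁ h₁ γ₂ h₂

end MetricReducedProduct

section Words

variable {G M : Type*} [Group M]

/-- The product of the syllables `τ ^ u * ψ g` for `(u, g)` in `l`: the value of a word in the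
stable letter and the base group of an HNN extension, for arbitrary interpretations of the two. -/
def syllableProd (ψ : G → M) (τ : M) (l : List (ℤˣ × G)) : M :=
  (l.map fun x ↦ τ ^ (x.1 : ℤ) * ψ x.2).prod

lemma syllableProd_nil (ψ : G → M) (τ : M) : syllableProd ψ τ [] = 1 := rfl

lemma syllableProd_cons (ψ : G → M) (τ : M) (x : ℤˣ × G) (l : List (ℤˣ × G)) :
    syllableProd ψ τ (x :: l) = τ ^ (x.1 : ℤ) * ψ x.2 * syllableProd ψ τ l := by
  simp [syllableProd]

variable [Group G] {A B : Subgroup G}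

/-- The value of a reduced word of an HNN extension when the base group is interpreted by `ψ` and
the stable letter by `τ`. -/
def wordVal (ψ : G → M) (τ : M) (w : NormalWord.ReducedWord G A B) : M :=
  ψ w.head * syllableProd ψ τ w.toList

lemma map_wordVal {M' : Type*} [Group M'] (q : M →* M') (ψ : G → M) (τ : M)
    (w : NormalWord.ReducedWord G A B) :
    q (wordVal ψ τ w) = wordVal (q ∘ ψ) (q τ) w := by
  simp [wordVal, syllableProd, map_list_prod, comp_def]

lemma exists_wordVal_eq (φ : A ≃* B) (γ : HNNExtension G A B φ) :
    ∃ w : NormalWord.ReducedWord G A B, wordVal of t w = γ := by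
  obtain ⟨d⟩ := NormalWord.TransversalPair.nonempty G A B
  obtain ⟨w, hw⟩ := (NormalWord.equiv φ d).symm.surjective γ
  exact ⟨w.toReducedWord, hw⟩

end Words

section Criterion

lemma eventually_atTop_mem_fst {α : Type*} (a : α) : ∀ᶠ i : Finset α × ℕ in atTop, a ∈ i.1 :=
  (eventually_ge_atTop ({a}, 0)).mono fun _ hi ↦ hi.1 (by simp)

lemma tendsto_atTop_one_div_snd_add_one (α : Type*) :
    Tendsto (fun i : Finset α × ℕ ↦ 1 / (i.2 + 1 : ℝ)) atTop (𝓝 0) := by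
  rw [← prod_atTop_atTop_eq]
  exact tendsto_one_div_add_atTop_nhds_zero_nat.comp tendsto_snd

variable {G : Type*} [Group G] {A B : Subgroup G}

/-- `ψ` and `τ` are an `ε`-approximate action of the HNN extension with respect to the finite set
`K` of coefficients and words with at most `N` occurrences of the stable letter: `ψ` is almost
multiplicative on `K`, `τ` almost conjugates `A` to `B` via `φ`, and nontrivial reduced words move
almost all points. -/
structure IsHNNApprox (φ : A ≃* B) (K : Finset G) (N : ℕ) (ε : ℝ) {Z : Type*} [Fintype Z]
    (ψ : G → Perm Z) (τ : Perm Z) : Prop where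
  map_mul : ∀ g ∈ K, ∀ h ∈ K, permDist (ψ (g * h)) (ψ g * ψ h) ≤ ε
  conj : ∀ a : A, (a : G) ∈ K → (φ a : G) ∈ K → permDist (τ * ψ a) (ψ (φ a) * τ) ≤ ε
  free : ∀ w : NormalWord.ReducedWord G A B, w.head ∈ K → (∀ x ∈ w.toList, x.2 ∈ K) →
    w.toList.length ≤ N → (w.toList = [] → w.head ≠ 1) → 1 - ε ≤ permDist (wordVal ψ τ w) 1

section

variable {φ : A ≃* B} {Z : Finset G × ℕ → Type*} [∀ i, Fintype (Z i)]
  {ψ : ∀ i, G → Perm (Z i)} {τ : ∀ i, Perm (Z i)}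

lemma exists_lift_of_forall_isHNNApprox
    (h : ∀ i, IsHNNApprox φ i.1 i.2 (1 / (i.2 + 1 : ℝ)) (ψ i) (τ i)) :
    ∃ L : HNNExtension G A B φ →* (∀ i, Perm (Z i)) ⧸ permNullSubgroup atTop Z,
      ∀ w : NormalWord.ReducedWord G A B,
        L (wordVal of t w) = (fun i ↦ wordVal (ψ i) (τ i) w : ∀ i, Perm (Z i)) := by
  let q := QuotientGroup.mk' (permNullSubgroup atTop Z)
  have hnull {σ ρ : ∀ i, Perm (Z i)}
      (h : ∀ᶠ i in atTop, permDist (σ i) (ρ i) ≤ 1 / (i.2 + 1 : ℝ)) : q σ = q ρ :=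
    permNullSubgroup_mk_eq_mk.2 <| squeeze_zero' (.of_forall fun i ↦ permDist_nonneg _ _) h
      (tendsto_atTop_one_div_snd_add_one G)
  let Ψ : G →* _ := MonoidHom.mk' (fun g ↦ q fun i ↦ ψ i g) fun g g' ↦ by
    rw [← map_mul]
    apply hnull
    filter_upwards [eventually_atTop_mem_fst g, eventually_atTop_mem_fst g'] with i hg hg'
    exact (h i).map_mul g hg g' hg'
  let L := lift (φ := φ) Ψ (q τ) fun a ↦ by
    simp only [Ψ, MonoidHom.mk'_apply, ← map_mul]
    apply hnull
    filter_upwards [eventually_atTop_mem_fst (a : G), eventually_atTop_mem_fst (φ a : G)]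
      with i ha hφa
    exact (h i).conj a ha hφa
  refine ⟨L, fun w ↦ ?_⟩
  have hL_of : L ∘ of = q ∘ fun g i ↦ ψ i g := funext fun g ↦ lift_of _ _ _ g
  rw [map_wordVal, hL_of, lift_t, ← map_wordVal q]
  exact congrArg q (funext fun i ↦ map_wordVal (Pi.evalMonoidHom (fun i ↦ Perm (Z i)) i) _ _ w)

end

theorem isSofic_of_forall_isHNNApprox {φ : A ≃* B}
    (h : ∀ (K : Finset G) (N : ℕ) (ε : ℝ), 0 < ε →
      ∃ (Z : Type) (_ : Fintype Z) (_ : Nonempty Z) (ψ : G → Perm Z) (τ : Perm Z),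
        IsHNNApprox φ K N ε ψ τ) :
    IsSofic (HNNExtension G A B φ) := by
  choose Z hZ hZ_nonempty ψ τ happrox using fun i : Finset G × ℕ ↦
    h i.1 i.2 (1 / (i.2 + 1 : ℝ)) (by positivity)
  obtain ⟨L, hL⟩ := exists_lift_of_forall_isHNNApprox happrox
  refine isSofic_of_monoidHom L fun γ hγ ↦ ?_
  obtain ⟨w, rfl⟩ := exists_wordVal_eq φ γ
  refine ⟨_, hL w, tendsto_of_tendsto_of_tendsto_of_le_of_le'
    (by simpa only [sub_zero] using (tendsto_atTop_one_div_snd_add_one G).const_sub 1)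
    tendsto_const_nhds ?_ (.of_forall fun i ↦ permDist_le_one _ _)⟩
  have hcoeff : ∀ᶠ i : Finset G × ℕ in atTop, ∀ x ∈ w.toList.toFinset, x.2 ∈ i.1 :=
    (eventually_all_finset _).2 fun x _ ↦ eventually_atTop_mem_fst x.2
  filter_upwards [eventually_atTop_mem_fst w.head, hcoeff,
    eventually_ge_atTop (∅, w.toList.length)] with i hhead hcoeff hlength
  refine (happrox i).free w hhead (by simpa using hcoeff) hlength.2 fun hnil hone ↦ hγ ?_
  simp [wordVal, syllableProd, hnil, hone]

end Criterion

universe u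

section FreeGroup

lemma exists_perm_extending_mul_left {Γ : Type*} [Group Γ] (W : Set Γ) [Finite W] (g : Γ) :
    ∃ σ : Perm W, ∀ w w' : W, (w' : Γ) = g * w → σ w = w' := by
  obtain ⟨σ, hσ⟩ := Perm.exists_extending_pair
    (fun w : {w : W × W // (w.2 : Γ) = g * w.1} ↦ w.1.1) (fun w ↦ w.1.2)
    (fun ⟨⟨w₁, w₂⟩, hw⟩ ⟨⟨v₁, v₂⟩, hv⟩ h ↦ by
      obtain rfl : w₁ = v₁ := h
      simpa [Subtype.ext_iff] using hw.trans hv.symm)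
    (fun ⟨⟨w₁, w₂⟩, hw⟩ ⟨⟨v₁, v₂⟩, hv⟩ h ↦ by
      obtain rfl : w₂ = v₂ := h
      simpa [Subtype.ext_iff] using mul_left_cancel (hw.symm.trans hv))
  exact ⟨σ, fun w w' h ↦ hσ ⟨(w, w'), h⟩⟩

variable {Y : Type*}

lemma finite_setOf_freeGroup_norm_le [Finite Y] (N : ℕ) : {g : FreeGroup Y | g.norm ≤ N}.Finite :=
  .of_finite_image ((List.finite_length_le (Y × Bool) N).subset (Set.image_subset_iff.2 fun _ ↦ id))
    FreeGroup.toWord_injective.injOn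

lemma freeGroup_mk_cons_true (y : Y) (L : List (Y × Bool)) :
    FreeGroup.mk ((y, true) :: L) = .of y * .mk L := by
  simp [FreeGroup.of]

lemma freeGroup_mk_cons_false (y : Y) (L : List (Y × Bool)) :
    FreeGroup.mk ((y, false) :: L) = (.of y)⁻¹ * .mk L := by
  simp [FreeGroup.of, FreeGroup.inv_mk, FreeGroup.invRev]

lemma coe_lift_mk_apply_of_eq_one {N : ℕ} {c : Y → Perm {g : FreeGroup Y | g.norm ≤ N}}
    (hc : ∀ y (w w' : {g : FreeGroup Y | g.norm ≤ N}),
      (w' : FreeGroup Y) = .of y * (w : FreeGroup Y) → c y w = w')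
    {w₀ : {g : FreeGroup Y | g.norm ≤ N}} (hw₀ : (w₀ : FreeGroup Y) = 1)
    (L : List (Y × Bool)) (hL : L.length ≤ N) :
    (FreeGroup.lift c (.mk L) w₀ : FreeGroup Y) = .mk L := by
  induction L with
  | nil => simpa [← FreeGroup.one_eq_mk] using hw₀
  | cons e L ih =>
    have ih := ih (Nat.le_of_succ_le hL)
    let w : {g : FreeGroup Y | g.norm ≤ N} := ⟨.mk (e :: L), FreeGroup.norm_mk_le.trans hL⟩
    suffices FreeGroup.lift c (.mk (e :: L)) w₀ = w from congrArg Subtype.val this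
    obtain ⟨y, _ | _⟩ := e
    · rw [freeGroup_mk_cons_false, map_mul, map_inv, FreeGroup.lift_apply_of, Perm.mul_apply,
        Perm.inv_eq_iff_eq, eq_comm]
      exact hc _ _ _ (by rw [ih]; simp [w, freeGroup_mk_cons_false])
    · rw [freeGroup_mk_cons_true, map_mul, FreeGroup.lift_apply_of, Perm.mul_apply]
      exact hc _ _ _ (by rw [ih]; simp [w, freeGroup_mk_cons_true])

lemma exists_freeGroup_hom_perm_injOn_ball (Y : Type u) [Finite Y] (N : ℕ) :
    ∃ (W : Type u) (_ : Fintype W) (f : FreeGroup Y →* Perm W),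
      ∀ g : FreeGroup Y, g.norm ≤ N → f g = 1 → g = 1 := by
  have : Finite {g : FreeGroup Y | g.norm ≤ N} := finite_setOf_freeGroup_norm_le N
  choose c hc using fun y : Y ↦
    exists_perm_extending_mul_left {g : FreeGroup Y | g.norm ≤ N} (.of y)
  let w₀ : {g : FreeGroup Y | g.norm ≤ N} := ⟨1, by simp [FreeGroup.norm_one]⟩
  refine ⟨{g : FreeGroup Y | g.norm ≤ N}, Fintype.ofFinite _, FreeGroup.lift c,
    fun g hg hg_one ↦ ?_⟩
  have h := coe_lift_mk_apply_of_eq_one (w₀ := w₀) hc rfl g.toWord hg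
  rw [FreeGroup.mk_toWord, hg_one] at h
  exact h.symm

end FreeGroup

section SkewProduct

variable {G : Type*} {P Q Y : Type*}

/-- The source of the `τ₀`-edge that is traversed, forwards or backwards, when `τ₀ ^ u` is applied
to a point. -/
def edgeSource (τ₀ : Perm P) (u : ℤˣ) : Perm P := if u = 1 then 1 else τ₀⁻¹

lemma edgeSource_eq_of_ne (τ₀ : Perm P) {u u' : ℤˣ} (h : u ≠ u') :
    edgeSource τ₀ u' = edgeSource τ₀ u * τ₀ ^ (u' : ℤ) := by
  obtain rfl | rfl := Int.units_eq_one_or u <;> obtain rfl | rfl := Int.units_eq_one_or u' <;>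
    simp_all [edgeSource]

/-- The `τ₀`-edges traversed while applying the word `l` to a point: each is given by its source,
as a function of the point, and by whether it is traversed forwards. -/
def edgePath (ψ : G → Perm P) (τ₀ : Perm P) : List (ℤˣ × G) → List (Perm P × Bool)
  | [] => []
  | x :: l =>
    (edgeSource τ₀ x.1 * ψ x.2 * syllableProd ψ τ₀ l, decide (x.1 = 1)) :: edgePath ψ τ₀ l

/-- The word in the labels of the `τ₀`-edges traversed while applying the word `l` to `p`. -/
def edgeLabels (ψ : G → Perm P) (τ₀ : Perm P) (y : P → Y) (l : List (ℤˣ × G)) (p : P) :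
    List (Y × Bool) :=
  (edgePath ψ τ₀ l).map fun e ↦ (y (e.1 p), e.2)

/-- The extension of `ψ` to `P × Q` that is trivial on the fibres. -/
def fibreTrivial (Q : Type*) (ψ : G → Perm P) (g : G) : Perm (P × Q) :=
  prodCongr (ψ g) (Equiv.refl Q)

/-- The skew product of a permutation `τ₀` of `P` with the cocycle `c` in the group `Q`. -/
def skewProd [Group Q] (τ₀ : Perm P) (c : P → Q) : Perm (P × Q) :=
  prodShear τ₀ fun p ↦ Equiv.mulLeft (c p)

@[simp]
lemma fibreTrivial_apply (ψ : G → Perm P) (g : G) (p : P) (q : Q) :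
    fibreTrivial Q ψ g (p, q) = (ψ g p, q) := rfl

@[simp]
lemma skewProd_apply [Group Q] (τ₀ : Perm P) (c : P → Q) (p : P) (q : Q) :
    skewProd τ₀ c (p, q) = (τ₀ p, c p * q) := rfl

lemma length_edgeLabels (ψ : G → Perm P) (τ₀ : Perm P) (y : P → Y) (l : List (ℤˣ × G)) (p : P) :
    (edgeLabels ψ τ₀ y l p).length = l.length := by
  rw [edgeLabels, List.length_map]
  induction l with
  | nil => rfl
  | cons x l ih => simp [edgePath, ih]

lemma skewProd_zpow_apply [Group Q] (f : FreeGroup Y →* Q) (τ₀ : Perm P) (y : P → Y) (u : ℤˣ)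
    (p : P) (q : Q) :
    (skewProd τ₀ (fun p ↦ f (.of (y p))) ^ (u : ℤ)) (p, q) =
      ((τ₀ ^ (u : ℤ)) p, f (.mk [(y (edgeSource τ₀ u p), decide (u = 1))]) * q) := by
  obtain rfl | rfl := Int.units_eq_one_or u
  · simp [edgeSource, FreeGroup.of]
  · have hsource : edgeSource τ₀ (-1) = τ₀⁻¹ := if_neg (by decide)
    simp only [Units.val_neg, Units.val_one, zpow_neg, zpow_one]
    rw [Perm.inv_eq_iff_eq, skewProd_apply, hsource, Perm.coe_inv, apply_symm_apply,
      decide_eq_false (by decide), freeGroup_mk_cons_false, ← FreeGroup.one_eq_mk, mul_one, map_inv,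
      mul_inv_cancel_left]

lemma syllableProd_skewProd_apply [Group Q] (f : FreeGroup Y →* Q) (ψ : G → Perm P) (τ₀ : Perm P)
    (y : P → Y) (l : List (ℤˣ × G)) (p : P) (q : Q) :
    syllableProd (fibreTrivial Q ψ) (skewProd τ₀ fun p ↦ f (.of (y p))) l (p, q) =
      (syllableProd ψ τ₀ l p, f (.mk (edgeLabels ψ τ₀ y l p)) * q) := by
  induction l with
  | nil => simp [syllableProd_nil, edgeLabels, edgePath, ← FreeGroup.one_eq_mk]
  | cons x l ih =>
    simp only [syllableProd_cons, Perm.mul_apply, ih, fibreTrivial_apply, skewProd_zpow_apply,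
      edgeLabels, edgePath, List.map_cons, ← mul_assoc, ← map_mul, FreeGroup.mul_mk,
      List.singleton_append]

lemma card_filter_exists_mem_edgePath_le [Fintype P] (ψ : G → Perm P) (τ₀ : Perm P)
    (S : Finset P) (l : List (ℤˣ × G)) :
    #{p | ∃ e ∈ edgePath ψ τ₀ l, e.1 p ∈ S} ≤ l.length * #S := by
  induction l with
  | nil => simp [edgePath]
  | cons x l ih =>
    let σ := edgeSource τ₀ x.1 * ψ x.2 * syllableProd ψ τ₀ l
    have hσ : #{p | σ p ∈ S} = #S := card_equiv σ (by simp)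
    simp only [edgePath, List.exists_mem_cons_iff, filter_or]
    calc _ ≤ #{p | σ p ∈ S} + #{p | ∃ e ∈ edgePath ψ τ₀ l, e.1 p ∈ S} := card_union_le _ _
      _ ≤ #S + l.length * #S := by rw [hσ]; gcongr
      _ = (x :: l).length * #S := by rw [List.length_cons, add_one_mul, add_comm]

end SkewProduct

section LabelledApprox

lemma card_filter_prod_le {X Y : Type*} [Fintype X] [Fintype Y] {q : X × Y → Prop}
    [DecidablePred q] {c : ℝ} (h : ∀ x, #{y | q (x, y)} ≤ c) :
    #{p | q p} ≤ Fintype.card X * c := by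
  have hsum : #{p | q p} = ∑ x, #{y | q (x, y)} := by
    simp only [card_filter, Fintype.sum_prod_type]
  rw [hsum]
  push_cast
  simpa using sum_le_card_nsmul univ _ c fun x _ ↦ h x

lemma card_product_univ_le {P Q : Type*} [Fintype P] [Fintype Q] {S : Finset P} {ε : ℝ}
    (hS : #S ≤ ε * Fintype.card P) :
    #(S ×ˢ (univ : Finset Q)) ≤ ε * Fintype.card (P × Q) := by
  rw [card_product, card_univ, Fintype.card_prod]
  push_cast
  rw [← mul_assoc]
  gcongr

variable {G : Type*} [Group G] {A B : Subgroup G} {P Y : Type*} [Fintype P]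

/-- `ψ` is an almost free almost action of the base group on `P`, `τ₀` almost conjugates `A` to `B`,
and `y` labels the edges of `τ₀` in such a way that, outside `bad`, an element of `K` that moves
the source (resp. target) of one edge to the source (resp. target) of an edge with the same label
lies in `A` (resp. `B`). -/
structure IsLabelledApprox (φ : A ≃* B) (K : Finset G) (ε : ℝ) (ψ : G → Perm P) (τ₀ : Perm P)
    (y : P → Y) (bad : Finset P) : Prop where
  card_bad_le : #bad ≤ ε * Fintype.card P
  map_mul : ∀ p ∉ bad, ∀ g ∈ K, ∀ h ∈ K, ψ (g * h) p = ψ g (ψ h p)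
  free : ∀ p ∉ bad, ∀ g ∈ K, ψ g p = p → g = 1
  conj : ∀ a : A, (a : G) ∈ K → (φ a : G) ∈ K →
    #{p | ¬(τ₀ (ψ a p) = ψ (φ a) (τ₀ p) ∧ y (ψ a p) = y p)} ≤ ε * Fintype.card P
  mem_toSubgroup : ∀ u, ∀ g ∈ K, ∀ p, edgeSource τ₀ u p ∉ bad → edgeSource τ₀ u (ψ g p) ∉ bad →
    y (edgeSource τ₀ u (ψ g p)) = y (edgeSource τ₀ u p) → g ∈ toSubgroup A B u

namespace IsLabelledApprox

variable {φ : A ≃* B} {K : Finset G} {ε : ℝ} {ψ : G → Perm P} {τ₀ : Perm P} {y : P → Y}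
  {bad : Finset P}

lemma isReduced_edgeLabels (h : IsLabelledApprox φ K ε ψ τ₀ y bad) {l : List (ℤˣ × G)}
    (hK : ∀ x ∈ l, x.2 ∈ K) (hl : l.IsChain fun a b ↦ a.2 ∈ toSubgroup A B a.1 → a.1 = b.1)
    {p : P} (hp : ∀ e ∈ edgePath ψ τ₀ l, e.1 p ∉ bad) :
    FreeGroup.IsReduced (edgeLabels ψ τ₀ y l p) := by
  induction l with
  | nil => exact .nil
  | cons x l ih =>
    obtain _ | ⟨x', l⟩ := l
    · exact .singleton
    simp only [List.isChain_cons_cons, List.forall_mem_cons, edgePath] at hl hK hp ih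
    refine List.isChain_cons_cons.2 ⟨fun hlabel ↦ ?_, ih hK.2 hl.2 hp.2⟩
    by_contra hdir
    have hne : x.1 ≠ x'.1 := fun h ↦ hdir (by rw [h])
    -- Opposite directions, so the edge just traversed starts where the next one would.
    have hsource : (edgeSource τ₀ x'.1 * ψ x'.2 * syllableProd ψ τ₀ l) p =
        edgeSource τ₀ x.1 (syllableProd ψ τ₀ (x' :: l) p) := by
      rw [syllableProd_cons, ← Perm.mul_apply, ← mul_assoc, ← mul_assoc,
        edgeSource_eq_of_ne τ₀ hne]
    refine hne (hl.1 (h.mem_toSubgroup x.1 x.2 hK.1 (syllableProd ψ τ₀ (x' :: l) p) ?_ hp.1 ?_))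
    · exact hsource ▸ hp.2.1
    · exact hlabel.trans (congrArg y hsource)

lemma mul_card_le_add_one_mul (h : IsLabelledApprox φ K ε ψ τ₀ y bad) {N : ℕ} :
    ε * Fintype.card P ≤ (N + 1) * ε * Fintype.card P := by
  rw [mul_assoc]
  exact le_mul_of_one_le_left ((Nat.cast_nonneg _).trans h.card_bad_le) (by simp)

lemma card_bad_union_edgePath_le (h : IsLabelledApprox φ K ε ψ τ₀ y bad) {N : ℕ} {l : List (ℤˣ × G)}
    (hl : l.length ≤ N) :
    #(bad ∪ ({p | ∃ e ∈ edgePath ψ τ₀ l, e.1 p ∈ bad} : Finset P)) ≤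
      (N + 1) * ε * Fintype.card P := by
  have hcard : #(bad ∪ ({p | ∃ e ∈ edgePath ψ τ₀ l, e.1 p ∈ bad} : Finset P)) ≤ (N + 1) * #bad :=
    calc _ ≤ #bad + l.length * #bad :=
          (card_union_le _ _).trans (by gcongr; exact card_filter_exists_mem_edgePath_le _ _ _ _)
      _ = (l.length + 1) * #bad := by rw [add_one_mul, add_comm]
      _ ≤ (N + 1) * #bad := by gcongr
  calc (#(bad ∪ ({p | ∃ e ∈ edgePath ψ τ₀ l, e.1 p ∈ bad} : Finset P)) : ℝ)
      ≤ (N + 1) * #bad := mod_cast hcard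
    _ ≤ (N + 1) * (ε * Fintype.card P) := by gcongr; exact h.card_bad_le
    _ = (N + 1) * ε * Fintype.card P := (mul_assoc _ _ _).symm

section

variable {Q : Type*} [Group Q] {f : FreeGroup Y →* Q} {N : ℕ}

lemma wordVal_apply_ne (h : IsLabelledApprox φ K ε ψ τ₀ y bad)
    (hf : ∀ g : FreeGroup Y, g.norm ≤ N → f g = 1 → g = 1) (w : NormalWord.ReducedWord G A B)
    (hhead : w.head ∈ K) (hK : ∀ x ∈ w.toList, x.2 ∈ K) (hN : w.toList.length ≤ N)
    (hne : w.toList = [] → w.head ≠ 1) {p : P} (hp : p ∉ bad)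
    (hpath : ∀ e ∈ edgePath ψ τ₀ w.toList, e.1 p ∉ bad) (q : Q) :
    wordVal (fibreTrivial Q ψ) (skewProd τ₀ fun p ↦ f (.of (y p))) w (p, q) ≠ (p, q) := by
  intro hfix
  simp only [wordVal, Perm.mul_apply, syllableProd_skewProd_apply, fibreTrivial_apply,
    Prod.mk.injEq, mul_eq_right] at hfix
  have hlabels : FreeGroup.mk (edgeLabels ψ τ₀ y w.toList p) = 1 :=
    hf _ (FreeGroup.norm_mk_le.trans ((length_edgeLabels ψ τ₀ y _ _).trans_le hN)) hfix.2
  have hreduced := (h.isReduced_edgeLabels hK w.chain hpath).reduce_eq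
  have hnil : w.toList = [] := by
    rw [← List.length_eq_zero_iff, ← length_edgeLabels ψ τ₀ y _ p, ← hreduced,
      ← FreeGroup.toWord_mk, hlabels, FreeGroup.toWord_one, List.length_nil]
  refine hne hnil (h.free p hp _ hhead ?_)
  simpa [hnil, syllableProd_nil] using hfix.1

theorem isHNNApprox [Nonempty P] [Fintype Q] (h : IsLabelledApprox φ K ε ψ τ₀ y bad)
    (hf : ∀ g : FreeGroup Y, g.norm ≤ N → f g = 1 → g = 1) :
    IsHNNApprox φ K N ((N + 1) * ε) (fibreTrivial Q ψ)
      (skewProd τ₀ fun p ↦ f (.of (y p))) where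
  map_mul g hg g' hg' :=
    permDist_le_of_forall_notMem_eq (S := bad ×ˢ univ)
      (card_product_univ_le (h.card_bad_le.trans h.mul_card_le_add_one_mul)) fun ⟨p, q⟩ hp ↦ by
        simp [h.map_mul p (by simpa using hp) g hg g' hg']
  conj a ha hφa :=
    permDist_le_of_forall_notMem_eq
      (S := ({p | ¬(τ₀ (ψ a p) = ψ (φ a) (τ₀ p) ∧ y (ψ a p) = y p)} : Finset P) ×ˢ univ)
      (card_product_univ_le ((h.conj a ha hφa).trans h.mul_card_le_add_one_mul)) fun ⟨p, q⟩ hp ↦ by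
        have hp : τ₀ (ψ a p) = ψ (φ a) (τ₀ p) ∧ y (ψ a p) = y p := by simpa using hp
        simp [hp]
  free w hhead hK hN hne :=
    one_sub_le_permDist_of_forall_notMem_ne
      (card_product_univ_le (h.card_bad_union_edgePath_le hN)) fun ⟨p, q⟩ hp ↦ by
        simp only [mem_product, mem_univ, and_true, mem_union, mem_filter_univ, not_or, not_exists,
          not_and] at hp
        exact h.wordVal_apply_ne hf w hhead hK hN hne hp.1 hp.2 q

end

end IsLabelledApprox

end LabelledApprox

section SoficBase

/-- On `D`, the almost action `ψ` is multiplicative and free at the point `x`. -/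
structure ActsFreelyAt {G X : Type*} [Mul G] (ψ : G → Perm X) (D : Set G) (x : X) : Prop where
  map_mul : ∀ g ∈ D, ∀ h ∈ D, ψ (g * h) x = ψ g (ψ h x)
  injOn : Set.InjOn (fun g ↦ ψ g x) D

namespace ActsFreelyAt

variable {G X : Type*} [Group G] {ψ : G → Perm X} {D : Set G} {x : X}

lemma map_one (h : ActsFreelyAt ψ D x) (h1 : 1 ∈ D) : ψ 1 x = x := by
  simpa using (h.map_mul 1 h1 1 h1).symm

lemma mono (h : ActsFreelyAt ψ D x) {D' : Set G} (hD : D' ⊆ D) : ActsFreelyAt ψ D' x where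
  map_mul g hg g' hg' := h.map_mul g (hD hg) g' (hD hg')
  injOn := h.injOn.mono hD

lemma comp {A : Type*} [Group A] {η : A →* G} (h : ActsFreelyAt ψ D x) (hη : Injective η)
    {E : Set A} (hE : Set.MapsTo η E D) : ActsFreelyAt (ψ ∘ η) E x where
  map_mul a ha b hb := by simpa using h.map_mul _ (hE ha) _ (hE hb)
  injOn := h.injOn.comp hη.injOn hE

end ActsFreelyAt

variable {G : Type*} [Group G]

lemma IsSofic.exists_permDist (hG : IsSofic G) (D : Finset G) {ε : ℝ} (hε : 0 < ε) :
    ∃ n, 0 < n ∧ ∃ ψ : G → Perm (Fin n), ∀ g ∈ D, ∀ h ∈ D,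
      permDist (ψ (g * h)) (ψ g * ψ h) ≤ ε ∧ (g ≠ h → 1 - ε ≤ permDist (ψ g) (ψ h)) := by
  obtain ⟨n, hn, ψ, hfree, hmul⟩ := hG (insert 1 (D ∪ D⁻¹ ∪ D⁻¹ * D)) (ε / 3) (by positivity)
  have hinv (g) (hg : g ∈ D) : permDist (ψ g⁻¹) (ψ g)⁻¹ ≤ ε / 3 + ε / 3 := by
    have hone := hmul g (by simp [hg]) g (by simp [hg])
    have hg' := hmul g (by simp [hg]) 1 (by simp)
    rw [inv_mul_cancel, inv_mul_cancel] at hone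
    rw [mul_one] at hg'
    refine (permDist_triangle _ ((ψ g)⁻¹ * ψ 1) _).trans (add_le_add hg'.le ?_)
    rw [← mul_one (ψ g)⁻¹, mul_assoc, permDist_mul_left, one_mul]
    exact hone.le
  refine ⟨n, hn, ψ, fun g hg h hh ↦ ⟨?_, fun hgh ↦ ?_⟩⟩
  · have hgh := hmul g⁻¹ (by simp [hg]) h (by simp [hh])
    rw [inv_inv] at hgh
    have hg' : permDist ((ψ g⁻¹)⁻¹ * ψ h) (ψ g * ψ h) ≤ ε / 3 + ε / 3 := by
      rw [permDist_mul_right, ← permDist_inv_mul_one, inv_inv, ← permDist_mul_right (ψ g)⁻¹]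
      simpa using hinv g hg
    linarith [permDist_triangle (ψ (g * h)) ((ψ g⁻¹)⁻¹ * ψ h) (ψ g * ψ h)]
  · have hmem : g⁻¹ * h ∈ D⁻¹ * D := mul_mem_mul (inv_mem_inv hg) hh
    have hmove := hfree (g⁻¹ * h) (by simp [hmem]) (by simpa [inv_mul_eq_one] using hgh)
    have hclose := hmul g (by simp [hg]) h (by simp [hh])
    rw [← permDist_inv_mul_one]
    linarith [permDist_triangle (ψ (g⁻¹ * h)) ((ψ g)⁻¹ * ψ h) 1]

lemma card_filter_ne_or_ne_and_eq_le {α X : Type*} [Fintype X] [Nonempty X]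
    [DecidableEq X] {g h : α} {σ τ σ' τ' : Perm X} {ε : ℝ} (hclose : permDist σ τ ≤ ε)
    (hfar : g ≠ h → 1 - ε ≤ permDist σ' τ') (hε : 0 ≤ ε) :
    #{x | σ x ≠ τ x ∨ g ≠ h ∧ σ' x = τ' x} ≤ 2 * ε * Fintype.card X := by
  have hne : (#{x | σ x ≠ τ x} : ℝ) ≤ ε * Fintype.card X := by
    rw [card_filter_ne_eq_permDist_mul]
    gcongr
  have heq : (#{x | g ≠ h ∧ σ' x = τ' x} : ℝ) ≤ ε * Fintype.card X := by
    by_cases hgh : g = h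
    · simp only [hgh, ne_eq, not_true_eq_false, false_and, filter_false, card_empty, Nat.cast_zero]
      positivity
    · simp only [ne_eq, hgh, not_false_eq_true, true_and]
      rw [card_filter_eq_eq_one_sub_permDist_mul]
      gcongr
      linarith [hfar hgh]
  calc (#{x | σ x ≠ τ x ∨ g ≠ h ∧ σ' x = τ' x} : ℝ)
      ≤ #{x | σ x ≠ τ x} + #{x | g ≠ h ∧ σ' x = τ' x} := by
        rw [filter_or]
        exact mod_cast card_union_le _ _
    _ ≤ 2 * ε * Fintype.card X := by linarith

lemma IsSofic.exists_actsFreelyAt (hG : IsSofic G) (D : Finset G) {δ : ℝ} (hδ : 0 < δ) :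
    ∃ n, 0 < n ∧ ∃ ψ : G → Perm (Fin n), #{x | ¬ActsFreelyAt ψ D x} ≤ δ * n := by
  obtain ⟨n, hn, ψ, hψ⟩ := hG.exists_permDist D (ε := δ / (2 * (#(D ×ˢ D) + 1))) (by positivity)
  have : Nonempty (Fin n) := ⟨⟨0, hn⟩⟩
  set ε := δ / (2 * (#(D ×ˢ D) + 1))
  let fails (d : G × G) : Finset (Fin n) :=
    {x | ψ (d.1 * d.2) x ≠ (ψ d.1 * ψ d.2) x ∨ d.1 ≠ d.2 ∧ ψ d.1 x = ψ d.2 x}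
  have hfails (d) (hd : d ∈ D ×ˢ D) : (#(fails d) : ℝ) ≤ 2 * ε * n := by
    obtain ⟨hmul, hne⟩ := hψ d.1 (mem_product.1 hd).1 d.2 (mem_product.1 hd).2
    simpa only [Fintype.card_fin] using card_filter_ne_or_ne_and_eq_le hmul hne (by positivity)
  have hcover : ({x | ¬ActsFreelyAt ψ D x} : Finset (Fin n)) ⊆ (D ×ˢ D).biUnion fails := by
    intro x hx
    contrapose! hx
    simp only [mem_biUnion, mem_product, fails, mem_filter_univ, Prod.exists] at hx
    push Not at hx
    rw [mem_filter_univ, not_not]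
    exact ⟨fun g hg h hh ↦ (hx g h ⟨hg, hh⟩).1, fun g hg h hh heq ↦
      by_contra fun hne ↦ (hx g h ⟨hg, hh⟩).2 hne heq⟩
  refine ⟨n, hn, ψ, ?_⟩
  calc (#{x | ¬ActsFreelyAt ψ D x} : ℝ) ≤ ∑ d ∈ D ×ˢ D, (#(fails d) : ℝ) :=
        mod_cast (card_le_card hcover).trans card_biUnion_le
    _ ≤ #(D ×ˢ D) * (2 * ε * n) := by simpa using sum_le_card_nsmul _ _ _ hfails
    _ ≤ (#(D ×ˢ D) + 1) * (2 * ε * n) := by gcongr; simp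
    _ = δ * n := by simp only [ε]; field_simp

end SoficBase

section RandomOrder

variable {X : Type*} [LinearOrder X]

/-- The first element of `U` for the order on `X` pulled back along `ω`. -/
noncomputable def firstOf [Finite X] (ω : Perm X) {U : Finset X} (hU : U.Nonempty) : X :=
  argminOn ω U (coe_nonempty.2 hU)

section

variable [Finite X] {ω : Perm X} {U V : Finset X}

lemma firstOf_mem (hU : U.Nonempty) : firstOf ω hU ∈ U :=
  argminOn_mem ω U (coe_nonempty.2 hU)

lemma apply_firstOf_le (hU : U.Nonempty) {x : X} (hx : x ∈ U) : ω (firstOf ω hU) ≤ ω x :=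
  argminOn_le ω (U : Set X) hx

lemma firstOf_eq_iff (hU : U.Nonempty) {x : X} :
    firstOf ω hU = x ↔ x ∈ U ∧ ∀ y ∈ U, ω x ≤ ω y := by
  constructor
  · rintro rfl
    exact ⟨firstOf_mem hU, fun _ ↦ apply_firstOf_le hU⟩
  · exact fun ⟨hx, h⟩ ↦ ω.injective ((apply_firstOf_le hU hx).antisymm (h _ (firstOf_mem hU)))

lemma firstOf_mul_swap (hU : U.Nonempty) {x y : X} (hy : y ∈ U) (h : firstOf ω hU = x) :
    firstOf (ω * swap x y) hU = y := by
  rw [firstOf_eq_iff] at h ⊢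
  refine ⟨hy, fun z hz ↦ ?_⟩
  rw [Perm.mul_apply, Perm.mul_apply, swap_apply_right]
  refine h.2 _ ?_
  rw [swap_apply_def]
  split_ifs
  exacts [hy, h.1, hz]

lemma firstOf_union_mem_symmDiff (hU : U.Nonempty) (hV : V.Nonempty)
    (h : firstOf ω hU ≠ firstOf ω hV) : firstOf ω (hU.inl (t := V)) ∈ symmDiff U V := by
  have hmem := (mem_union.1 (firstOf_mem (ω := ω) (hU.inl (t := V))))
  contrapose! h
  have hboth : firstOf ω (hU.inl (t := V)) ∈ U ∧ firstOf ω (hU.inl (t := V)) ∈ V := by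
    rw [mem_symmDiff] at h
    tauto
  rw [(firstOf_eq_iff hU).2 ⟨hboth.1, fun y hy ↦ apply_firstOf_le _ (mem_union_left _ hy)⟩,
    (firstOf_eq_iff hV).2 ⟨hboth.2, fun y hy ↦ apply_firstOf_le _ (mem_union_right _ hy)⟩]

end

variable [Fintype X] {U V : Finset X}

lemma card_filter_firstOf_eq_mul_card (hU : U.Nonempty) {x : X} (hx : x ∈ U) :
    #{ω | firstOf ω hU = x} * #U = Fintype.card (Perm X) := by
  have hle {y z : X} (hz : z ∈ U) : #{ω | firstOf ω hU = y} ≤ #{ω | firstOf ω hU = z} :=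
    card_le_card_of_injOn (· * swap y z)
      (fun ω hω ↦ by simpa using firstOf_mul_swap hU hz (by simpa using hω))
      (mul_left_injective _).injOn
  calc #{ω | firstOf ω hU = x} * #U = ∑ y ∈ U, #{ω | firstOf ω hU = y} := by
        rw [sum_congr rfl fun y hy ↦ (hle hx).antisymm (hle hy), sum_const, smul_eq_mul, mul_comm]
    _ = Fintype.card (Perm X) :=
        (card_eq_sum_card_fiberwise fun ω _ ↦ firstOf_mem hU).symm

lemma card_filter_firstOf_ne_mul_card_le (hU : U.Nonempty) (hV : V.Nonempty) :
    #{ω | firstOf ω hU ≠ firstOf ω hV} * #(U ∪ V) ≤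
      #(symmDiff U V) * Fintype.card (Perm X) := by
  have hUV : (U ∪ V).Nonempty := hU.inl
  have hsub : ({ω | firstOf ω hU ≠ firstOf ω hV} : Finset (Perm X)) ⊆
      (symmDiff U V).biUnion fun x ↦ {ω | firstOf ω hUV = x} := fun ω hω ↦ by
    simpa using firstOf_union_mem_symmDiff hU hV (by simpa using hω)
  calc #{ω | firstOf ω hU ≠ firstOf ω hV} * #(U ∪ V)
      ≤ (∑ x ∈ symmDiff U V, #{ω | firstOf ω hUV = x}) * #(U ∪ V) := by
        gcongr
        exact (card_le_card hsub).trans card_biUnion_le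
    _ = ∑ _ ∈ symmDiff U V, Fintype.card (Perm X) := by
        rw [sum_mul]
        exact sum_congr rfl fun x hx ↦
          card_filter_firstOf_eq_mul_card hUV (symmDiff_le_sup (a := U) (b := V) hx)
    _ = #(symmDiff U V) * Fintype.card (Perm X) := by rw [sum_const, smul_eq_mul]

end RandomOrder

section Patches

variable {A X : Type*} [LinearOrder X]

/-- The points `x` whose patch `{α s x | s ∈ F}` contains `z`. -/
def patchCenters (α : A → Perm X) (F : Finset A) (z : X) : Finset X :=
  F.image fun s ↦ (α s).symm z

lemma mem_patchCenters {α : A → Perm X} {F : Finset A} {z x : X} :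
    x ∈ patchCenters α F z ↔ ∃ s ∈ F, α s x = z := by
  simp only [patchCenters, mem_image, symm_apply_eq, eq_comm (a := z)]

/-- The center of the patch that `z` is assigned to when patches are ranked by `ω`: the first point
whose patch contains `z`. -/
noncomputable def patchCenter [Finite X] (α : A → Perm X) {F : Finset A} (hF : F.Nonempty)
    (ω : Perm X) (z : X) : X :=
  firstOf ω (hF.image fun s ↦ (α s).symm z)

lemma patchCenter_eq_iff [Finite X] {α : A → Perm X} {F : Finset A} {hF : F.Nonempty} {ω : Perm X}
    {z x : X} : patchCenter α hF ω z = x ↔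
      (∃ s ∈ F, α s x = z) ∧ ∀ s ∈ F, ∀ y, α s y = z → ω x ≤ ω y := by
  rw [patchCenter, firstOf_eq_iff]
  change x ∈ patchCenters α F z ∧ (∀ y ∈ patchCenters α F z, _) ↔ _
  simp only [mem_patchCenters, forall_exists_index, and_imp]
  tauto

variable [Group A] {α β : A → Perm X} {F : Finset A}

section Invariance

lemma card_patchCenters_of_actsFreelyAt {z : X} (hz : ∀ s ∈ F, ActsFreelyAt α F ((α s).symm z)) :
    #(patchCenters α F z) = #F :=
  card_image_of_injOn fun s hs t ht h ↦ (hz s hs).injOn hs ht <| by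
    simpa using (congrArg (α t) h).symm

variable {D : Set A} {a : A} {z : X}

lemma card_patchCenters_sdiff_le [DecidableEq A] (hFD : ↑F ⊆ D) (ha : a ∈ D)
    (hz : ∀ s ∈ F, ActsFreelyAt α D ((α s).symm z)) :
    #(patchCenters α F z \ patchCenters α F (α a z)) ≤ #{s ∈ F | a * s ∉ F} := by
  refine card_le_card_of_surjOn (fun s ↦ (α s).symm z) fun x hx ↦ ?_
  obtain ⟨hx, hax⟩ := mem_sdiff.1 hx
  obtain ⟨s, hs, rfl⟩ := mem_image.1 hx
  have has : a * s ∉ F := fun has ↦ hax <| mem_patchCenters.2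
    ⟨a * s, has, by simp [(hz s hs).map_mul a ha s (hFD hs)]⟩
  exact ⟨s, mem_coe.2 (mem_filter.2 ⟨hs, has⟩), rfl⟩

lemma card_symmDiff_patchCenters_le [DecidableEq A] (hFD : ↑F ⊆ D) (ha : a ∈ D)
    (hz : ∀ s ∈ F, ActsFreelyAt α D ((α s).symm z)) :
    #(symmDiff (patchCenters α F (α a z)) (patchCenters α F z)) ≤ 2 * #{s ∈ F | a * s ∉ F} := by
  have hcard : #(patchCenters α F (α a z)) ≤ #(patchCenters α F z) :=
    card_image_le.trans_eq
      (card_patchCenters_of_actsFreelyAt fun s hs ↦ (hz s hs).mono hFD).symm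
  have hsdiff := card_patchCenters_sdiff_le hFD ha hz
  calc _ ≤ _ + _ := card_union_le _ _
    _ ≤ _ := by rw [two_mul]; exact
      add_le_add ((card_sdiff_le_card_sdiff_iff.2 hcard).trans hsdiff) hsdiff

lemma card_filter_patchCenter_ne_le [DecidableEq A] [Fintype X] (hF : F.Nonempty) (hFD : ↑F ⊆ D)
    (ha : a ∈ D) (hz : ∀ s ∈ F, ActsFreelyAt α D ((α s).symm z)) {ε : ℝ}
    (hε : #{s ∈ F | a * s ∉ F} ≤ ε * #F) :
    #{ω | patchCenter α hF ω (α a z) ≠ patchCenter α hF ω z} ≤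
      2 * ε * Fintype.card (Perm X) := by
  have hF_pos : (0 : ℝ) < #F := mod_cast hF.card_pos
  have hunion : #F ≤ #(patchCenters α F (α a z) ∪ patchCenters α F z) :=
    (card_patchCenters_of_actsFreelyAt fun s hs ↦ (hz s hs).mono hFD).symm.trans_le
      (card_le_card subset_union_right)
  refine le_of_mul_le_mul_right ?_ hF_pos
  calc (#{ω | patchCenter α hF ω (α a z) ≠ patchCenter α hF ω z} * #F : ℝ)
      ≤ 2 * #{s ∈ F | a * s ∉ F} * Fintype.card (Perm X) := by
        exact_mod_cast (Nat.mul_le_mul_left _ hunion).trans <|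
          (card_filter_firstOf_ne_mul_card_le _ _).trans <|
            Nat.mul_le_mul_right _ (card_symmDiff_patchCenters_le hFD ha hz)
    _ ≤ 2 * (ε * #F) * Fintype.card (Perm X) := by gcongr
    _ = 2 * ε * Fintype.card (Perm X) * #F := by ring

end Invariance

section Transport

variable [Finite X] {E : Finset A}

lemma patchCenter_mul_inv_eq [DecidableEq A] (hFE : F ⊆ E) (hFF : F⁻¹ * F ⊆ E) {hF : F.Nonempty}
    {x : X} (hα : ActsFreelyAt α E x) (hβ : ActsFreelyAt β E x) {π : Perm X}
    (hπ : ∀ a ∈ E, π (α a x) = β a x) {ω : Perm X} {r : A} (hr : r ∈ F)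
    (h : patchCenter α hF ω (α r x) = x) : patchCenter β hF (ω * π⁻¹) (β r x) = x := by
  have hmem {s} (hs : s ∈ F) : s⁻¹ * r ∈ E := hFF (mul_mem_mul (inv_mem_inv hs) hr)
  have h1 : 1 ∈ E := by simpa using hmem hr
  have hπx : π.symm x = x := by
    rw [symm_apply_eq]
    simpa [hα.map_one h1, hβ.map_one h1] using (hπ 1 h1).symm
  have hsplit {γ : A → Perm X} (hγ : ActsFreelyAt γ E x) {s} (hs : s ∈ F) :
      γ s (γ (s⁻¹ * r) x) = γ r x := by
    rw [← hγ.map_mul s (hFE hs) _ (hmem hs), mul_inv_cancel_left]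
  refine patchCenter_eq_iff.2 ⟨⟨r, hr, rfl⟩, fun s hs y hy ↦ ?_⟩
  obtain rfl : y = π (α (s⁻¹ * r) x) := by
    rw [hπ _ (hmem hs)]
    exact (β s).injective (hy.trans (hsplit hβ hs).symm)
  simpa [hπx] using (patchCenter_eq_iff.1 h).2 s hs _ (hsplit hα hs)

lemma ActsFreelyAt.eq_and_eq_of_patchCenter_eq (hFE : F ⊆ E) {hF : F.Nonempty} {x x' : X}
    (hx : ActsFreelyAt α E x) {ω : Perm X} {r r' : A} (hr : r ∈ F) (hr' : r' ∈ F)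
    (hc : patchCenter α hF ω (α r x) = x) (hc' : patchCenter α hF ω (α r' x') = x')
    (h : α r x = α r' x') : x = x' ∧ r = r' := by
  obtain rfl : x = x' := by rw [← hc, h, hc']
  exact ⟨rfl, hx.injOn (hFE hr) (hFE hr') h⟩

theorem exists_perm_transporting_patches [DecidableEq A] (hFE : F ⊆ E) (hFF : F⁻¹ * F ⊆ E)
    (hF : F.Nonempty) :
    ∃ (τ₀ : Perm (X × Perm X)) (π : X → Perm X), ∀ x ω, ∀ r ∈ F,
      ActsFreelyAt α E x → ActsFreelyAt β E x → patchCenter α hF ω (α r x) = x →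
        τ₀ (α r x, ω) = (β r x, ω * (π x)⁻¹) := by
  have hlocal (x : X) : ∃ π : Perm X, ActsFreelyAt α E x → ActsFreelyAt β E x →
      ∀ a ∈ E, π (α a x) = β a x := by
    by_cases h : ActsFreelyAt α E x ∧ ActsFreelyAt β E x
    · obtain ⟨π, hπ⟩ := Perm.exists_extending_pair (fun a : E ↦ α a x) (fun a : E ↦ β a x)
        h.1.injOn.injective h.2.injOn.injective
      exact ⟨π, fun _ _ a ha ↦ hπ ⟨a, ha⟩⟩
    · exact ⟨1, fun hα hβ ↦ (h ⟨hα, hβ⟩).elim⟩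
  choose π hπ using hlocal
  let I := {i : X × Perm X × F // ActsFreelyAt α E i.1 ∧ ActsFreelyAt β E i.1 ∧
    patchCenter α hF i.2.1 (α i.2.2 i.1) = i.1}
  obtain ⟨τ₀, hτ₀⟩ := Perm.exists_extending_pair
    (fun i : I ↦ (α i.1.2.2 i.1.1, i.1.2.1))
    (fun i : I ↦ (β i.1.2.2 i.1.1, i.1.2.1 * (π i.1.1)⁻¹))
    (by
      rintro ⟨⟨x, ω, r⟩, hα, _, hc⟩ ⟨⟨x', ω', r'⟩, _, _, hc'⟩ h
      obtain ⟨hx, rfl⟩ : α r x = α r' x' ∧ ω = ω' := Prod.mk.inj h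
      obtain ⟨rfl, hr⟩ := hα.eq_and_eq_of_patchCenter_eq hFE r.2 r'.2 hc hc' hx
      obtain rfl := Subtype.ext hr
      rfl)
    (by
      rintro ⟨⟨x, ω, r⟩, hα, hβ, hc⟩ ⟨⟨x', ω', r'⟩, hα', hβ', hc'⟩ h
      obtain ⟨hx, hω⟩ : β r x = β r' x' ∧ ω * (π x)⁻¹ = ω' * (π x')⁻¹ := Prod.mk.inj h
      have hc := patchCenter_mul_inv_eq hFE hFF hα hβ (hπ x hα hβ) r.2 hc
      have hc' := patchCenter_mul_inv_eq hFE hFF hα' hβ' (hπ x' hα' hβ') r'.2 hc'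
      rw [← hω] at hc'
      obtain ⟨rfl, hr⟩ := hβ.eq_and_eq_of_patchCenter_eq hFE r.2 r'.2 hc hc' hx
      obtain rfl := Subtype.ext hr
      obtain rfl := mul_right_cancel hω
      rfl)
  exact ⟨τ₀, π, fun x ω r hr hα hβ hc ↦ hτ₀ ⟨(x, ω, ⟨r, hr⟩), hα, hβ, hc⟩⟩

end Transport

end Patches

section BaseGroup

variable {G : Type*} [Group G] {A B : Subgroup G}

/-- The embedding of `A` in `G` whose range is the subgroup `toSubgroup A B u`: the inclusion for
`u = 1`, and `φ` for `u = -1`. -/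
def associatedHom (φ : A ≃* B) (u : ℤˣ) : A →* G :=
  if u = 1 then A.subtype else B.subtype.comp φ.toMonoidHom

lemma associatedHom_injective (φ : A ≃* B) (u : ℤˣ) : Injective (associatedHom φ u) := by
  obtain rfl | rfl := Int.units_eq_one_or u
  · exact A.subtype_injective
  · exact B.subtype_injective.comp φ.injective

lemma associatedHom_mem_toSubgroup (φ : A ≃* B) (a : A) (u : ℤˣ) :
    associatedHom φ u a ∈ toSubgroup A B u := by
  obtain rfl | rfl := Int.units_eq_one_or u
  · exact a.2
  · exact (φ a).2

variable {X : Type*} {φ : A ≃* B} {ψ : G → Perm X} {K : Finset G} {E F : Finset A}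

/-- The products of `1` or an element of `K` with an element of one of the two copies of `E` in
`G`. -/
noncomputable def window (φ : A ≃* B) (K : Finset G) (E : Finset A) : Finset G :=
  insert 1 K * univ.biUnion fun u ↦ E.image (associatedHom φ u)

lemma mul_associatedHom_mem_window {g : G} (hg : g ∈ insert 1 K) {a : A} (ha : a ∈ E) (u : ℤˣ) :
    g * associatedHom φ u a ∈ window φ K E :=
  mul_mem_mul hg (mem_biUnion.2 ⟨u, mem_univ _, mem_image_of_mem _ ha⟩)

lemma associatedHom_mem_window {a : A} (ha : a ∈ E) (u : ℤˣ) :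
    associatedHom φ u a ∈ window φ K E := by
  simpa using mul_associatedHom_mem_window (mem_insert_self 1 K) ha u

lemma insert_one_subset_window (hE : 1 ∈ E) : insert 1 K ⊆ window φ K E := fun g hg ↦ by
  simpa using mul_associatedHom_mem_window (φ := φ) hg hE 1

lemma ActsFreelyAt.comp_associatedHom {x : X} (h : ActsFreelyAt ψ (window φ K E) x) (u : ℤˣ) :
    ActsFreelyAt (ψ ∘ associatedHom φ u) E x :=
  h.comp (associatedHom_injective φ u) fun _ ha ↦ associatedHom_mem_window ha u

lemma ActsFreelyAt.mul_associatedHom_eq {x : X} (h : ActsFreelyAt ψ (window φ K E) x) (hE : 1 ∈ E)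
    {g : G} (hg : g ∈ K) {a b : A} (ha : a ∈ E) (hb : b ∈ E) {u : ℤˣ}
    (heq : ψ g (ψ (associatedHom φ u a) x) = ψ (associatedHom φ u b) x) :
    g * associatedHom φ u a = associatedHom φ u b := by
  have hg := mem_insert_of_mem (b := 1) hg
  refine h.injOn (mul_associatedHom_mem_window hg ha u) (associatedHom_mem_window hb u) ?_
  exact (h.map_mul g (insert_one_subset_window hE hg) _ (associatedHom_mem_window ha u)).trans heq

/-- The almost action `ψ` is free on `D` at `z` and at the centers of all the patches of shape `F`
containing `z`. -/
def IsPatchable (ψ : G → Perm X) (D : Set G) (F : Finset A) (z : X) : Prop :=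
  ActsFreelyAt ψ D z ∧ ∀ s ∈ F, ActsFreelyAt ψ D ((ψ s).symm z)

lemma card_filter_not_isPatchable_le [Fintype X] (ψ : G → Perm X) (D : Set G) (F : Finset A) :
    #{z | ¬IsPatchable ψ D F z} ≤ (#F + 1) * #{x | ¬ActsFreelyAt ψ D x} := by
  let S : Finset X := {x | ¬ActsFreelyAt ψ D x}
  have hsub : ({z | ¬IsPatchable ψ D F z} : Finset X) ⊆ S ∪ F.biUnion fun s ↦ S.image (ψ s) := by
    intro z hz
    contrapose! hz
    simp only [S, mem_union, mem_biUnion, mem_image, mem_filter_univ, not_or, not_not, not_exists,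
      not_and] at hz
    rw [mem_filter_univ, not_not]
    exact ⟨hz.1, fun s hs ↦ by_contra fun h ↦ hz.2 s hs _ h (apply_symm_apply _ _)⟩
  calc #{z | ¬IsPatchable ψ D F z} ≤ #S + #F * #S :=
        (card_le_card hsub).trans <| (card_union_le _ _).trans <|
          Nat.add_le_add_left (card_biUnion_le_card_mul _ _ _ fun _ _ ↦ card_image_le) _
    _ = (#F + 1) * #S := by ring

variable [LinearOrder X]

/-- The permutation `τ₀` maps the patch with center `x` of the action of `A` to the corresponding
patch of the action of `B`, while the ranking of the patches is changed by `π x`. -/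
def TransportsPatches [Finite X] (φ : A ≃* B) (ψ : G → Perm X) (D : Set G) (hF : F.Nonempty)
    (τ₀ : Perm (X × Perm X)) (π : X → Perm X) : Prop :=
  ∀ x ω, ∀ s ∈ F, ActsFreelyAt ψ D x →
    patchCenter (fun a : A ↦ ψ a) hF ω (ψ s x) = x →
      τ₀ (ψ s x, ω) = (ψ (φ s) x, ω * (π x)⁻¹)

lemma exists_transportsPatches [Finite X] (φ : A ≃* B) (ψ : G → Perm X) (K : Finset G)
    (hF : F.Nonempty) (hFE : F ⊆ E) (hFF : F⁻¹ * F ⊆ E) :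
    ∃ τ₀ π, TransportsPatches φ ψ (window φ K E) hF τ₀ π := by
  obtain ⟨τ₀, π, h⟩ := exists_perm_transporting_patches (α := ψ ∘ associatedHom φ 1)
    (β := ψ ∘ associatedHom φ (-1)) hFE hFF hF
  exact ⟨τ₀, π, fun x ω s hs hx ↦
    h x ω s hs (hx.comp_associatedHom 1) (hx.comp_associatedHom (-1))⟩

/-- Labels `(z, ω)` by the center of the patch that `z` is assigned to, together with `ω`. -/
noncomputable def patchLabel [Finite X] (ψ : G → Perm X) (hF : F.Nonempty)
    (p : X × Perm X) : X × Perm X :=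
  (patchCenter (fun a : A ↦ ψ a) hF p.2 p.1, p.2)

namespace TransportsPatches

variable {hF : F.Nonempty} {τ₀ : Perm (X × Perm X)} {π : X → Perm X}

lemma exists_apply_eq [Finite X] {D : Set G} (h : TransportsPatches φ ψ D hF τ₀ π)
    {p : X × Perm X} (hp : IsPatchable ψ D F p.1) :
    ∃ s ∈ F, ActsFreelyAt ψ D (patchLabel ψ hF p).1 ∧ ψ s (patchLabel ψ hF p).1 = p.1 ∧
      τ₀ p = (ψ (φ s) (patchLabel ψ hF p).1, p.2 * (π (patchLabel ψ hF p).1)⁻¹) := by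
  obtain ⟨⟨s, hs, hsx⟩, -⟩ := patchCenter_eq_iff.1
    (rfl : patchCenter (fun a : A ↦ ψ a) hF p.2 p.1 = (patchLabel ψ hF p).1)
  have hsx : ψ s (patchLabel ψ hF p).1 = p.1 := hsx
  have hfree : ActsFreelyAt ψ D (patchLabel ψ hF p).1 := by
    rw [← (symm_apply_eq _).2 hsx.symm]
    exact hp.2 s hs
  have hτ := h _ p.2 s hs hfree (by rw [hsx]; rfl)
  rw [hsx] at hτ
  exact ⟨s, hs, hfree, hsx, hτ⟩

lemma exists_apply_associatedHom_eq [Finite X] {D : Set G} (h : TransportsPatches φ ψ D hF τ₀ π)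
    (u : ℤˣ) {p : X × Perm X} (hp : IsPatchable ψ D F (edgeSource τ₀ u p).1) :
    ∃ s ∈ F, ActsFreelyAt ψ D (patchLabel ψ hF (edgeSource τ₀ u p)).1 ∧
      ψ (associatedHom φ u s) (patchLabel ψ hF (edgeSource τ₀ u p)).1 = p.1 := by
  obtain ⟨s, hs, hfree, hsource, htarget⟩ := h.exists_apply_eq hp
  refine ⟨s, hs, hfree, ?_⟩
  obtain rfl | rfl := Int.units_eq_one_or u
  · exact hsource
  · have hp : τ₀ (edgeSource τ₀ (-1) p) = p := apply_symm_apply τ₀ p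
    rw [hp] at htarget
    exact (congrArg Prod.fst htarget).symm

lemma mem_toSubgroup [Finite X] (h : TransportsPatches φ ψ (window φ K E) hF τ₀ π) (hFE : F ⊆ E)
    (hE : 1 ∈ E) (u : ℤˣ) {g : G} (hg : g ∈ K) {p : X × Perm X}
    (hp : IsPatchable ψ (window φ K E) F (edgeSource τ₀ u p).1)
    (hgp : IsPatchable ψ (window φ K E) F (edgeSource τ₀ u (fibreTrivial (Perm X) ψ g p)).1)
    (hlabel : patchLabel ψ hF (edgeSource τ₀ u (fibreTrivial (Perm X) ψ g p)) =
      patchLabel ψ hF (edgeSource τ₀ u p)) :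
    g ∈ toSubgroup A B u := by
  obtain ⟨s, hs, hfree, hsp⟩ := h.exists_apply_associatedHom_eq u hp
  obtain ⟨s', hs', -, hs'p⟩ := h.exists_apply_associatedHom_eq u hgp
  have hmul : g * associatedHom φ u s = associatedHom φ u s' := by
    refine hfree.mul_associatedHom_eq hE hg (hFE hs) (hFE hs') ?_
    rw [hsp, ← hlabel, hs'p]
    rfl
  rw [eq_mul_inv_of_mul_eq hmul]
  exact mul_mem (associatedHom_mem_toSubgroup φ s' u) (inv_mem (associatedHom_mem_toSubgroup φ s u))

lemma apply_fibreTrivial [Finite X] (h : TransportsPatches φ ψ (window φ K E) hF τ₀ π)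
    (hFE : F ⊆ E) (hE : 1 ∈ E) {a : A} (ha : (a : G) ∈ K) (hφa : (φ a : G) ∈ K)
    {p : X × Perm X} (hp : IsPatchable ψ (window φ K E) F p.1)
    (hap : IsPatchable ψ (window φ K E) F (ψ a p.1))
    (hlabel : patchLabel ψ hF (fibreTrivial (Perm X) ψ a p) = patchLabel ψ hF p) :
    τ₀ (fibreTrivial (Perm X) ψ a p) = fibreTrivial (Perm X) ψ (φ a) (τ₀ p) := by
  obtain ⟨s, hs, hfree, hsp, hτ⟩ := h.exists_apply_eq hp
  obtain ⟨s', hs', -, hs'p, hτ'⟩ := h.exists_apply_eq (p := fibreTrivial (Perm X) ψ a p) hap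
  rw [hlabel] at hs'p hτ'
  obtain rfl : a * s = s' := associatedHom_injective φ 1 <| by
    rw [map_mul]
    refine hfree.mul_associatedHom_eq hE ha (hFE hs) (hFE hs') ?_
    exact (congrArg (ψ a) hsp).trans hs'p.symm
  have hmul := hfree.map_mul (φ a) (insert_one_subset_window hE (mem_insert_of_mem hφa)) (φ s)
    (associatedHom_mem_window (hFE hs) (-1))
  rw [map_mul, Subgroup.coe_mul, hmul] at hτ'
  rw [hτ, hτ']
  rfl

end TransportsPatches

section Count

variable {hF : F.Nonempty} {ε : ℝ}

lemma IsPatchable.card_filter_patchLabel_ne_le [Fintype X] {z : X}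
    (hz : IsPatchable ψ (window φ K E) F z) (hFE : F ⊆ E) (hE : 1 ∈ E) {a : A} (ha : (a : G) ∈ K)
    (hε : #{s ∈ F | a * s ∉ F} ≤ ε * #F) :
    #{ω | patchLabel ψ hF (ψ a z, ω) ≠ patchLabel ψ hF (z, ω)} ≤
      2 * ε * Fintype.card (Perm X) := by
  simp only [patchLabel, ne_eq, Prod.mk.injEq, and_true]
  exact card_filter_patchCenter_ne_le (α := fun a : A ↦ ψ a) (D := {b | (b : G) ∈ window φ K E}) hF
    (fun s hs ↦ associatedHom_mem_window (φ := φ) (hFE hs) 1)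
    (insert_one_subset_window hE (mem_insert_of_mem ha))
    (fun s hs ↦ (hz.2 s hs).comp (η := A.subtype) A.subtype_injective fun _ hb ↦ hb) hε

lemma card_filter_isPatchable_and_patchLabel_ne_le [Fintype X] (hFE : F ⊆ E) (hE : 1 ∈ E) {a : A}
    (ha : (a : G) ∈ K) (hε : 0 ≤ ε) (hFolner : #{s ∈ F | a * s ∉ F} ≤ ε * #F) :
    #{p : X × Perm X | IsPatchable ψ (window φ K E) F p.1 ∧
      patchLabel ψ hF (fibreTrivial (Perm X) ψ a p) ≠ patchLabel ψ hF p} ≤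
        2 * ε * Fintype.card (X × Perm X) := by
  refine (card_filter_prod_le (c := 2 * ε * Fintype.card (Perm X)) fun z ↦ ?_).trans_eq ?_
  · by_cases hz : IsPatchable ψ (window φ K E) F z
    · simpa only [hz, true_and, fibreTrivial_apply] using
        hz.card_filter_patchLabel_ne_le hFE hE ha hFolner
    · simp only [hz, false_and, filter_false, card_empty, Nat.cast_zero]
      positivity
  · rw [Fintype.card_prod]
    push_cast
    ring

lemma TransportsPatches.card_filter_not_conj_le [Fintype X] {τ₀ : Perm (X × Perm X)}
    {π : X → Perm X} (h : TransportsPatches φ ψ (window φ K E) hF τ₀ π) (hFE : F ⊆ E)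
    (hE : 1 ∈ E) {a : A} (ha : (a : G) ∈ K) (hφa : (φ a : G) ∈ K) (hε : 0 ≤ ε)
    (hbad : #{z | ¬IsPatchable ψ (window φ K E) F z} ≤ ε * Fintype.card X)
    (hFolner : #{s ∈ F | a * s ∉ F} ≤ ε * #F) :
    #{p | ¬(τ₀ (fibreTrivial (Perm X) ψ a p) = fibreTrivial (Perm X) ψ (φ a) (τ₀ p) ∧
      patchLabel ψ hF (fibreTrivial (Perm X) ψ a p) = patchLabel ψ hF p)} ≤
        4 * ε * Fintype.card (X × Perm X) := by
  let S : Finset X := {z | ¬IsPatchable ψ (window φ K E) F z}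
  let S' : Finset X := {z | ¬IsPatchable ψ (window φ K E) F (ψ a z)}
  let T : Finset (X × Perm X) := {p | IsPatchable ψ (window φ K E) F p.1 ∧
    patchLabel ψ hF (fibreTrivial (Perm X) ψ a p) ≠ patchLabel ψ hF p}
  have hS' : #S' = #S := card_equiv (ψ a) fun z ↦ by simp only [S, S', mem_filter_univ]
  have hcover : ({p | ¬(τ₀ (fibreTrivial (Perm X) ψ a p) = fibreTrivial (Perm X) ψ (φ a) (τ₀ p) ∧
      patchLabel ψ hF (fibreTrivial (Perm X) ψ a p) = patchLabel ψ hF p)} : Finset (X × Perm X)) ⊆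
        S ×ˢ univ ∪ S' ×ˢ univ ∪ T := by
    intro p hp
    contrapose hp
    simp only [S, S', T, mem_union, mem_product, mem_univ, and_true, mem_filter_univ, not_or,
      not_and, not_not] at hp
    obtain ⟨⟨hp, hap⟩, hlabel⟩ := hp
    rw [mem_filter_univ, not_not]
    exact ⟨h.apply_fibreTrivial hFE hE ha hφa hp hap (hlabel hp), hlabel hp⟩
  have hS_card : #(S ×ˢ (univ : Finset (Perm X))) ≤ ε * Fintype.card (X × Perm X) :=
    card_product_univ_le hbad
  have hS'_card : #(S' ×ˢ (univ : Finset (Perm X))) ≤ ε * Fintype.card (X × Perm X) :=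
    card_product_univ_le (hS' ▸ hbad)
  have hT_card : #T ≤ 2 * ε * Fintype.card (X × Perm X) :=
    card_filter_isPatchable_and_patchLabel_ne_le hFE hE ha hε hFolner
  calc _ ≤ (#(S ×ˢ univ ∪ S' ×ˢ univ ∪ T) : ℝ) := mod_cast card_le_card hcover
    _ ≤ #(S ×ˢ (univ : Finset (Perm X))) + #(S' ×ˢ (univ : Finset (Perm X))) + #T :=
      mod_cast (card_union_le _ _).trans (Nat.add_le_add_right (card_union_le _ _) _)
    _ ≤ 4 * ε * Fintype.card (X × Perm X) := by linarith

theorem TransportsPatches.isLabelledApprox [Fintype X] {τ₀ : Perm (X × Perm X)}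
    {π : X → Perm X} (h : TransportsPatches φ ψ (window φ K E) hF τ₀ π) (hFE : F ⊆ E)
    (hE : 1 ∈ E) (hε : 0 ≤ ε)
    (hbad : #{z | ¬IsPatchable ψ (window φ K E) F z} ≤ ε * Fintype.card X)
    (hFolner : ∀ a : A, (a : G) ∈ K → #{s ∈ F | a * s ∉ F} ≤ ε * #F) :
    IsLabelledApprox φ K (4 * ε) (fibreTrivial (Perm X) ψ) τ₀ (patchLabel ψ hF)
      (({z | ¬IsPatchable ψ (window φ K E) F z} : Finset X) ×ˢ univ) where
  card_bad_le := by
    refine (card_product_univ_le hbad).trans ?_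
    gcongr
    linarith
  map_mul p hp g hg g' hg' := by
    have hp : IsPatchable ψ (window φ K E) F p.1 := by simpa using hp
    have hK := (subset_insert 1 K).trans (insert_one_subset_window (φ := φ) hE)
    exact Prod.ext (hp.1.map_mul g (hK hg) g' (hK hg')) rfl
  free p hp g hg heq := by
    have hp : IsPatchable ψ (window φ K E) F p.1 := by simpa using hp
    have hK := insert_one_subset_window (φ := φ) (K := K) hE
    have h1 := hK (mem_insert_self 1 K)
    refine hp.1.injOn (hK (mem_insert_of_mem hg)) h1 ?_
    exact (congrArg Prod.fst heq).trans (hp.1.map_one h1).symm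
  conj a ha hφa := by
    convert h.card_filter_not_conj_le hFE hE ha hφa hε hbad (hFolner a ha)
  mem_toSubgroup u g hg p hp hgp hlabel := by
    have hp : IsPatchable ψ (window φ K E) F (edgeSource τ₀ u p).1 := by simpa using hp
    have hgp : IsPatchable ψ (window φ K E) F
      (edgeSource τ₀ u (fibreTrivial (Perm X) ψ g p)).1 := by simpa using hgp
    exact h.mem_toSubgroup hFE hE u hg hp hgp hlabel

end Count

end BaseGroup

section Folner

/-- Amenability in Følner's form: there are finite sets almost invariant under left multiplication
by finitely many prescribed elements. -/
def FolnerAmenable (A : Type*) [Group A] : Prop :=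
  ∀ (K : Finset A) (ε : ℝ), 0 < ε →
    ∃ F : Finset A, F.Nonempty ∧ ∀ a ∈ K, #{s ∈ F | a * s ∉ F} ≤ ε * #F

lemma MonotileablyAmenable.folnerAmenable {A : Type*} [Group A] [DecidableEq A]
    (hA : MonotileablyAmenable A) : FolnerAmenable A := by
  intro K ε hε
  obtain ⟨T, -, hT⟩ := hA K ε hε
  refine ⟨T, nonempty_iff_ne_empty.2 fun h ↦ by simp [h] at hT, fun a ha ↦ hT.le.trans' ?_⟩
  refine mod_cast card_le_card_of_injOn (a * ·) (fun s hs ↦ ?_) (mul_right_injective a).injOn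
  obtain ⟨hs, has⟩ : s ∈ T ∧ a * s ∉ T := by simpa using hs
  exact mem_sdiff.2 ⟨mul_mem_mul ha hs, has⟩

end Folner

section Main

variable {G : Type*} [Group G] (A B : Subgroup G) (φ : A ≃* B)

theorem exists_isLabelledApprox (hG : IsSofic G) (hA : FolnerAmenable A)
    (K : Finset G) {ε : ℝ} (hε : 0 < ε) :
    ∃ (P Y : Type) (_ : Fintype P) (_ : Nonempty P) (_ : Finite Y) (ψ : G → Perm P) (τ₀ : Perm P)
      (y : P → Y) (bad : Finset P), IsLabelledApprox φ K ε ψ τ₀ y bad := by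
  obtain ⟨F, hF, hFolner⟩ := hA (K.subtype (· ∈ A)) (ε / 4) (by positivity)
  let E := F ∪ F⁻¹ * F
  have hE : 1 ∈ E := by
    obtain ⟨s, hs⟩ := hF
    exact mem_union_right _ (by simpa using mul_mem_mul (inv_mem_inv hs) hs)
  obtain ⟨n, hn, ψ, hψ⟩ := hG.exists_actsFreelyAt (window φ K E)
    (δ := ε / 4 / (#F + 1)) (by positivity)
  have : Nonempty (Fin n) := ⟨⟨0, hn⟩⟩
  obtain ⟨τ₀, π, h⟩ := exists_transportsPatches φ ψ K (E := E) hF subset_union_left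
    subset_union_right
  have hbad : #{z | ¬IsPatchable ψ (window φ K E) F z} ≤ ε / 4 * Fintype.card (Fin n) := by
    calc (#{z | ¬IsPatchable ψ (window φ K E) F z} : ℝ)
        ≤ (#F + 1) * #{x | ¬ActsFreelyAt ψ (window φ K E) x} :=
          mod_cast card_filter_not_isPatchable_le ψ _ F
      _ ≤ (#F + 1) * (ε / 4 / (#F + 1) * n) := by gcongr
      _ = ε / 4 * Fintype.card (Fin n) := by rw [Fintype.card_fin]; field_simp
  have happrox := h.isLabelledApprox subset_union_left hE (by positivity) hbad fun a ha ↦ by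
    convert hFolner a (mem_subtype.2 ha)
  rw [mul_div_cancel₀ ε four_ne_zero] at happrox
  exact ⟨_, _, _, inferInstance, inferInstance, _, _, _, _, happrox⟩

theorem isSofic_HNNExtension_general (hG : IsSofic G) (hA : FolnerAmenable A) :
    IsSofic (HNNExtension G A B φ) := by
  refine isSofic_of_forall_isHNNApprox fun K N ε hε ↦ ?_
  obtain ⟨P, Y, _, _, _, ψ, τ₀, y, bad, h⟩ :=
    exists_isLabelledApprox A B φ hG hA K (ε := ε / (N + 1)) (by positivity)
  obtain ⟨W, _, f, hf⟩ := exists_freeGroup_hom_perm_injOn_ball Y N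
  have happrox := h.isHNNApprox hf
  rw [mul_div_cancel₀ ε N.cast_add_one_ne_zero] at happrox
  exact ⟨P × Perm W, inferInstance, inferInstance, _, _, happrox⟩

end Main

/-- Let `G` be a sofic group, let `A` be a monotileably amenable subgroup of `G` and let
`θ : A → G` be an injective group homomorphism (with image the subgroup `B` and induced
isomorphism `φ : A ≃* B`). Then the HNN extension `G*_θ`, generated by `G` and an extra
generator `t` with the relations conjugating `A` to `B` via `φ`, is sofic. -/
theorem isSofic_HNNExtension {G : Type*} [Group G] [DecidableEq G]
    (A B : Subgroup G) (φ : A ≃* B)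
    (hG : IsSofic G) (hA : MonotileablyAmenable A) :
    IsSofic (HNNExtension G A B φ) := by
  exact isSofic_HNNExtension_general A B φ hG hA.folnerAmenable
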